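/- For any set Z, Hechler's poset H_Z for adding an almost disjoint family has the Knaster property: every uncountable set of conditions of H_Z contains an uncountable subset of pairwise compatible conditions. -/

import Mathlib

universe u

/-- A condition of Hechler's poset `H_Z` for adding an almost disjoint family: a function
`p : F_p × n_p → 2` with `F_p ⊆ Z` finite and `n_p ∈ ℕ`, where `n_p = 0` iff `F_p = ∅`.
The partial function is represented by a total function `f : Z → ℕ → Bool` which is
`false` outside the domain `F × [0, n)`. -/
structure HechlerCond (Z : Type u) where
  F : Finset Z
  n : ℕ
  f : Z → ℕ → Bool
  supp : ∀ z i, f z i = true → z ∈ F ∧ i < n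
  nz : n = 0 ↔ F = ∅

/-- The order of `H_Z`: `q ≤ p` iff `p ⊆ q` (as partial functions) and for every
`i` with `n_p ≤ i < n_q` there is at most one `z ∈ F_p` with `q(z, i) = 1`. -/
def HechlerLe {Z : Type u} (q p : HechlerCond Z) : Prop :=
  p.F ⊆ q.F ∧ p.n ≤ q.n ∧
  (∀ z ∈ p.F, ∀ i < p.n, q.f z i = p.f z i) ∧
  ∀ i : ℕ, p.n ≤ i → i < q.n → (p.F.filter fun z => q.f z i = true).card ≤ 1

/-!
By the Δ-system lemma, uncountably many of the given conditions have domains `F_p` any two of which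
meet in the same finite root `R`. Only countably many pairs `(n_p, p ↾ R × n_p)` are possible, so
uncountably many of these conditions share both. Any two distinct ones among them then agree on
the common part of their domains and have the same height, so their union is a condition; it is
below both because it adds no new levels.
-/

section DeltaSystem

variable {I Z : Type*} {A : Set I}

theorem exists_not_countable_inter_preimage_singleton {C : Type*} [Countable C]
    (hA : ¬ A.Countable) (g : I → C) : ∃ c, ¬ (A ∩ g ⁻¹' {c}).Countable := by
  by_contra! h
  have h_cover : A ⊆ ⋃ c, A ∩ g ⁻¹' {c} := fun i hi => Set.mem_iUnion.2 ⟨g i, hi, rfl⟩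
  exact hA ((Set.countable_iUnion h).mono h_cover)

theorem exists_maximal_subset_pairwise (A : Set I) (r : I → I → Prop) :
    ∃ B, Maximal (fun B => B ⊆ A ∧ B.Pairwise r) B := by
  refine zorn_subset {B | B ⊆ A ∧ B.Pairwise r} fun c hc hchain =>
    ⟨⋃₀ c, ⟨Set.sUnion_subset fun s hs => (hc hs).1, ?_⟩, fun s => Set.subset_sUnion_of_mem⟩
  exact (Set.pairwise_sUnion hchain.directedOn).2 fun s hs => (hc hs).2

theorem exists_not_countable_subset_pairwise {r : I → I → Prop} [Std.Symm r]
    (hA : ¬ A.Countable) (hr : ∀ i ∈ A, {j ∈ A | ¬ r i j}.Countable) :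
    ∃ B ⊆ A, ¬ B.Countable ∧ B.Pairwise r := by
  obtain ⟨B, hB⟩ := exists_maximal_subset_pairwise A r
  obtain ⟨hBA, hBr⟩ := hB.prop
  refine ⟨B, hBA, fun hBc => hA ?_, hBr⟩
  have h_cover : A ⊆ B ∪ ⋃ i ∈ B, {j ∈ A | ¬ r i j} := by
    intro j hj
    by_contra hj_cover
    simp only [Set.mem_union, Set.mem_iUnion, Set.mem_ofPred_eq, not_or, not_exists, not_and,
      not_not] at hj_cover
    obtain ⟨hjB, hj_related⟩ := hj_cover
    refine hjB (hB.mem_of_prop_insert ⟨Set.insert_subset hj hBA, ?_⟩)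
    exact Set.pairwise_insert_of_symm.2 ⟨hBr, fun i hi _ => symm (hj_related i hi hj)⟩
  exact (hBc.union (hBc.biUnion fun i hi => hr i (hBA hi))).mono h_cover

theorem exists_not_countable_subset_pairwiseDisjoint {F : I → Finset Z} (hA : ¬ A.Countable)
    (hF : ∀ z, {i ∈ A | z ∈ F i}.Countable) :
    ∃ B ⊆ A, ¬ B.Countable ∧ B.PairwiseDisjoint F := by
  refine exists_not_countable_subset_pairwise hA fun i _ => ?_
  refine ((F i).countable_toSet.biUnion fun z _ => hF z).mono ?_
  rintro j ⟨hj, hij⟩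
  obtain ⟨z, hzi, hzj⟩ := Finset.not_disjoint_iff.1 hij
  exact Set.mem_biUnion hzi ⟨hj, hzj⟩

variable [DecidableEq Z]

/-- The finite sets `F i`, for `i ∈ B`, form a Δ-system with root `R`. The family is indexed, so
`F i = F j = R` is allowed for distinct `i, j ∈ B`. -/
def IsDeltaSystemOn (F : I → Finset Z) (B : Set I) (R : Finset Z) : Prop :=
  B.Pairwise fun i j => F i ∩ F j = R

theorem IsDeltaSystemOn.of_erase {F : I → Finset Z} {B : Set I} {R : Finset Z} {w : Z}
    (h : IsDeltaSystemOn (fun i => (F i).erase w) B R) (hw : ∀ i ∈ B, w ∈ F i) :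
    IsDeltaSystemOn F B (insert w R) := by
  intro i hi j hj hij
  calc F i ∩ F j = insert w ((F i ∩ F j).erase w) :=
        (Finset.insert_erase (Finset.mem_inter.2 ⟨hw i hi, hw j hj⟩)).symm
    _ = insert w ((F i).erase w ∩ (F j).erase w) := by
        rw [Finset.erase_inter, Finset.inter_erase, Finset.erase_idem]
    _ = insert w R := congrArg (insert w) (h hi hj hij)

theorem exists_not_countable_subset_isDeltaSystemOn_of_card_eq {F : I → Finset Z} {k : ℕ}
    (hA : ¬ A.Countable) (hF : ∀ i ∈ A, (F i).card = k) :
    ∃ B ⊆ A, ¬ B.Countable ∧ ∃ R, IsDeltaSystemOn F B R := by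
  induction k generalizing A F with
  | zero =>
    refine ⟨A, subset_rfl, hA, ∅, fun i hi j _ _ => ?_⟩
    simp only [Finset.card_eq_zero.1 (hF i hi), Finset.empty_inter]
  | succ k ih =>
    by_cases h_point : ∃ w, ¬ {i ∈ A | w ∈ F i}.Countable
    · obtain ⟨w, hw⟩ := h_point
      have h_card : ∀ i ∈ {i ∈ A | w ∈ F i}, ((F i).erase w).card = k := by
        rintro i ⟨hi, hwi⟩
        rw [Finset.card_erase_of_mem hwi, hF i hi, Nat.add_sub_cancel]
      obtain ⟨B, hBA, hB, R, hR⟩ := ih hw h_card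
      exact ⟨B, fun i hi => (hBA hi).1, hB, insert w R, hR.of_erase fun i hi => (hBA hi).2⟩
    · push Not at h_point
      obtain ⟨B, hBA, hB, hdisj⟩ := exists_not_countable_subset_pairwiseDisjoint hA h_point
      exact ⟨B, hBA, hB, ∅, fun i hi j hj hij =>
        Finset.disjoint_iff_inter_eq_empty.1 (hdisj hi hj hij)⟩

theorem exists_not_countable_subset_isDeltaSystemOn (hA : ¬ A.Countable) (F : I → Finset Z) :
    ∃ B ⊆ A, ¬ B.Countable ∧ ∃ R, IsDeltaSystemOn F B R := by
  obtain ⟨k, hk⟩ := exists_not_countable_inter_preimage_singleton hA fun i => (F i).card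
  obtain ⟨B, hBA, hB, hR⟩ :=
    exists_not_countable_subset_isDeltaSystemOn_of_card_eq hk fun i hi => hi.2
  exact ⟨B, fun i hi => (hBA hi).1, hB, hR⟩

end DeltaSystem

namespace HechlerCond

variable {Z : Type*} {p q r : HechlerCond Z}

theorem f_eq_false_of_notMem {z : Z} (hz : z ∉ p.F) (i : ℕ) : p.f z i = false :=
  Bool.eq_false_iff.2 fun h => hz (p.supp z i h).1

/-- The finite set `{i < n_p : p(z, i) = 1}`: the approximation given by `p` to the `z`-th member
of the generic almost disjoint family. -/
def row (p : HechlerCond Z) (z : Z) : Finset ℕ :=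
  (Finset.range p.n).filter fun i => p.f z i = true

theorem mem_row {z : Z} {i : ℕ} : i ∈ p.row z ↔ p.f z i = true := by
  rw [row, Finset.mem_filter, Finset.mem_range, and_iff_right_of_imp fun h => (p.supp z i h).2]

theorem row_eq_row_iff {z : Z} : p.row z = q.row z ↔ p.f z = q.f z := by
  simp_rw [Finset.ext_iff, mem_row, funext_iff, ← Bool.eq_iff_iff]

theorem hechlerLe_of_n_eq (hF : p.F ⊆ r.F) (hn : r.n = p.n) (hf : ∀ z ∈ p.F, r.f z = p.f z) :
    HechlerLe r p :=
  ⟨hF, hn.ge, fun z hz i _ => congrFun (hf z hz) i,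
    fun _ hpi hir => absurd (hir.trans_eq hn) hpi.not_gt⟩

variable [DecidableEq Z]

/-- The union `p ∪ q` of two conditions of the same height. Where `p` and `q` disagree, which the
definition does not exclude, its value is `1`. -/
def union (p q : HechlerCond Z) (hn : p.n = q.n) : HechlerCond Z where
  F := p.F ∪ q.F
  n := p.n
  f z i := p.f z i || q.f z i
  supp z i h := by
    rcases (Bool.or_eq_true _ _).mp h with hp | hq
    · exact ⟨Finset.mem_union_left _ (p.supp z i hp).1, (p.supp z i hp).2⟩
    · exact ⟨Finset.mem_union_right _ (q.supp z i hq).1, hn ▸ (q.supp z i hq).2⟩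
  nz := by rw [Finset.union_eq_empty, ← p.nz, ← q.nz, ← hn, and_self]

theorem union_f_of_mem_left (hn : p.n = q.n) (hf : ∀ z ∈ p.F ∩ q.F, p.f z = q.f z) {z : Z}
    (hz : z ∈ p.F) : (p.union q hn).f z = p.f z := by
  funext i
  change (p.f z i || q.f z i) = p.f z i
  by_cases hzq : z ∈ q.F
  · rw [hf z (Finset.mem_inter.2 ⟨hz, hzq⟩), Bool.or_self]
  · rw [f_eq_false_of_notMem hzq, Bool.or_false]

theorem union_comm (hn : p.n = q.n) : p.union q hn = q.union p hn.symm := by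
  simp only [union, Finset.union_comm p.F, hn, Bool.or_comm]

theorem union_hechlerLe_left (hn : p.n = q.n) (hf : ∀ z ∈ p.F ∩ q.F, p.f z = q.f z) :
    HechlerLe (p.union q hn) p :=
  hechlerLe_of_n_eq Finset.subset_union_left rfl fun _ => union_f_of_mem_left hn hf

theorem union_hechlerLe_right (hn : p.n = q.n) (hf : ∀ z ∈ p.F ∩ q.F, p.f z = q.f z) :
    HechlerLe (p.union q hn) q := by
  rw [union_comm]
  exact union_hechlerLe_left hn.symm fun z hz => (hf z (Finset.inter_comm q.F p.F ▸ hz)).symm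

end HechlerCond

/-- For any set `Z`, Hechler's poset `H_Z` for adding an almost
disjoint family has the Knaster property: every uncountable set of conditions contains
an uncountable subset of pairwise compatible conditions. -/
theorem stmt_19 {Z : Type u} (A : Set (HechlerCond Z)) (hA : ¬ A.Countable) :
    ∃ B ⊆ A, ¬ B.Countable ∧ ∀ p ∈ B, ∀ q ∈ B,
      ∃ r : HechlerCond Z, HechlerLe r p ∧ HechlerLe r q := by
  classical
  obtain ⟨D, hDA, hD, R, hR⟩ := exists_not_countable_subset_isDeltaSystemOn hA HechlerCond.F
  obtain ⟨⟨n, rows⟩, hB⟩ := exists_not_countable_inter_preimage_singleton hD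
    fun p => (p.n, fun z : R => p.row z)
  refine ⟨_, Set.inter_subset_left.trans hDA, hB, ?_⟩
  rintro p ⟨hpD, hp⟩ q ⟨hqD, hq⟩
  obtain ⟨hn, hrows⟩ := Prod.mk.inj (hp.trans hq.symm)
  have hf : ∀ z ∈ p.F ∩ q.F, p.f z = q.f z := by
    intro z hz
    rcases eq_or_ne p q with rfl | hpq
    · rfl
    · rw [hR hpD hqD hpq] at hz
      exact HechlerCond.row_eq_row_iff.1 (congrFun hrows ⟨z, hz⟩)
  exact ⟨p.union q hn, HechlerCond.union_hechlerLe_left hn hf,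
    HechlerCond.union_hechlerLe_right hn hf⟩
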